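/- arXiv:1902.01158 — 2 statements merged into one kernel-verified Lean document; each statement's English description precedes it below -/
import Mathlib

section
/- Suppose r₁, r₂, r₃, r₄ > 0 and t₁ < t₂ < t₃ < t₄ are real numbers, and consider the four circles Cᵢ in ℝ² with centers (tᵢ, rᵢ) and radii rᵢ (each tangent to the x-axis from above at (tᵢ,0)). Assume that C₁ is externally tangent to C₂ and to C₄, and that C₃ is externally tangent to C₂ and to C₄. Then, setting ℓ = t₂ − t₁, m = t₃ − t₂ and r = t₄ − t₃, one has ℓ·r = m·(ℓ + m + r). -/
/-- The point `(x, y)` in the Euclidean plane `ℝ²` (with the Euclidean distance). -/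
noncomputable def pt (x y : ℝ) : EuclideanSpace ℝ (Fin 2) :=
  (WithLp.equiv 2 (Fin 2 → ℝ)).symm ![x, y]

/-! By Pythagoras, two circles tangent to a line from the same side, with radii `b` and `d`, are
externally tangent exactly when their points of tangency lie at distance `2√(bd)`. In a closed
chain of four such circles both products of opposite distances are therefore `4√(r₁r₂r₃r₄)`.
The ordering of the points then turns distances into differences. -/

theorem dist_pt_sq (a b c d : ℝ) : dist (pt a b) (pt c d) ^ 2 = (a - c) ^ 2 + (b - d) ^ 2 := by
  simp [EuclideanSpace.dist_sq_eq, pt, Real.dist_eq]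

theorem sub_sq_eq_four_mul_of_dist_pt_eq_add {a b c d : ℝ}
    (h : dist (pt a b) (pt c d) = b + d) : (a - c) ^ 2 = 4 * b * d := by
  have pythagoras : (b + d) ^ 2 = (a - c) ^ 2 + (b - d) ^ 2 := h ▸ dist_pt_sq a b c d
  linear_combination -pythagoras

theorem dist_mul_dist_eq_of_tangent_cycle {r₁ r₂ r₃ r₄ t₁ t₂ t₃ t₄ : ℝ}
    (h₁₂ : dist (pt t₁ r₁) (pt t₂ r₂) = r₁ + r₂)
    (h₁₄ : dist (pt t₁ r₁) (pt t₄ r₄) = r₁ + r₄)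
    (h₃₂ : dist (pt t₃ r₃) (pt t₂ r₂) = r₃ + r₂)
    (h₃₄ : dist (pt t₃ r₃) (pt t₄ r₄) = r₃ + r₄) :
    dist t₁ t₂ * dist t₃ t₄ = dist t₃ t₂ * dist t₁ t₄ := by
  simp only [Real.dist_eq, ← abs_mul]
  rw [← sq_eq_sq_iff_abs_eq_abs]
  calc ((t₁ - t₂) * (t₃ - t₄)) ^ 2
      = (4 * r₁ * r₂) * (4 * r₃ * r₄) := by
        rw [mul_pow, sub_sq_eq_four_mul_of_dist_pt_eq_add h₁₂,
          sub_sq_eq_four_mul_of_dist_pt_eq_add h₃₄]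
    _ = (4 * r₃ * r₂) * (4 * r₁ * r₄) := by ring
    _ = ((t₃ - t₂) * (t₁ - t₄)) ^ 2 := by
        rw [mul_pow, sub_sq_eq_four_mul_of_dist_pt_eq_add h₃₂,
          sub_sq_eq_four_mul_of_dist_pt_eq_add h₁₄]

/-- For four circles tangent to the x-axis from above at `t₁ < t₂ < t₃ < t₄`
with `C₁` tangent to `C₂, C₄` and `C₃` tangent to `C₂, C₄`, setting
`ℓ = t₂ - t₁`, `m = t₃ - t₂`, `r = t₄ - t₃`, we have `ℓ·r = m·(ℓ + m + r)`. -/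
theorem gap_quadratic (r₁ r₂ r₃ r₄ t₁ t₂ t₃ t₄ : ℝ)
    (hr₁ : 0 < r₁) (hr₂ : 0 < r₂) (hr₃ : 0 < r₃) (hr₄ : 0 < r₄)
    (h₁₂ : t₁ < t₂) (h₂₃ : t₂ < t₃) (h₃₄ : t₃ < t₄)
    (htan₁₂ : dist (pt t₁ r₁) (pt t₂ r₂) = r₁ + r₂)
    (htan₁₄ : dist (pt t₁ r₁) (pt t₄ r₄) = r₁ + r₄)
    (htan₃₂ : dist (pt t₃ r₃) (pt t₂ r₂) = r₃ + r₂)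
    (htan₃₄ : dist (pt t₃ r₃) (pt t₄ r₄) = r₃ + r₄) :
    (t₂ - t₁) * (t₄ - t₃) = (t₃ - t₂) * ((t₂ - t₁) + (t₃ - t₂) + (t₄ - t₃)) := by
  have h₁₄ : t₁ < t₄ := h₁₂.trans (h₂₃.trans h₃₄)
  have opposite_products : (t₂ - t₁) * (t₄ - t₃) = (t₃ - t₂) * (t₄ - t₁) := by
    simpa only [Real.dist_eq, abs_sub_comm t₁, abs_sub_comm t₃ t₄, abs_of_pos (sub_pos.2 h₁₂),
      abs_of_pos (sub_pos.2 h₂₃), abs_of_pos (sub_pos.2 h₃₄), abs_of_pos (sub_pos.2 h₁₄)]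
      using dist_mul_dist_eq_of_tangent_cycle htan₁₂ htan₁₄ htan₃₂ htan₃₄
  rw [opposite_products]
  ring
end

section
/- Let f(ℓ, r) = (−(ℓ + r) + √((ℓ + r)² + 4·ℓ·r))/2. If 0 < ℓ < ℓ' and 0 < r < r' are real numbers, then f(ℓ, r) < f(ℓ', r'). -/
/-! The number `x = f(ℓ, r)` is the larger root of `x ^ 2 + (ℓ + r) * x = ℓ * r`, which can be
rewritten as `(ℓ - x) * (r - x) = 2 * x ^ 2`. Both factors on the left are nonnegative, so
increasing `ℓ` and `r` increases the left-hand side while `x` is kept fixed; this puts `x` below the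
larger root for the new parameters. -/

/-- The function `f` of the paper: the larger root `x` of `(ℓ - x) * (r - x) = 2 * x ^ 2`. It has
this meaning only where `0 ≤ (ℓ + r) ^ 2 + 4 * ℓ * r`, since `Real.sqrt` is `0` on negative
numbers. -/
noncomputable def largerRoot (ℓ r : ℝ) : ℝ :=
  (-(ℓ + r) + Real.sqrt ((ℓ + r) ^ 2 + 4 * ℓ * r)) / 2

section largerRoot

variable {ℓ ℓ' r r' x : ℝ}

theorem largerRoot_comm (ℓ r : ℝ) : largerRoot ℓ r = largerRoot r ℓ := by
  simp only [largerRoot, add_comm ℓ r, mul_right_comm 4 ℓ r]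

theorem two_mul_largerRoot_add (ℓ r : ℝ) :
    2 * largerRoot ℓ r + (ℓ + r) = Real.sqrt ((ℓ + r) ^ 2 + 4 * ℓ * r) := by
  rw [largerRoot]
  ring

theorem sub_largerRoot_mul_sub_largerRoot (hD : 0 ≤ (ℓ + r) ^ 2 + 4 * ℓ * r) :
    (ℓ - largerRoot ℓ r) * (r - largerRoot ℓ r) = 2 * largerRoot ℓ r ^ 2 := by
  have hsq : (2 * largerRoot ℓ r + (ℓ + r)) ^ 2 = (ℓ + r) ^ 2 + 4 * ℓ * r := by
    rw [two_mul_largerRoot_add, Real.sq_sqrt hD]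
  linarith

theorem lt_largerRoot (hx : 2 * x ^ 2 < (ℓ - x) * (r - x)) : x < largerRoot ℓ r := by
  have hsqrt : 2 * x + (ℓ + r) < Real.sqrt ((ℓ + r) ^ 2 + 4 * ℓ * r) :=
    Real.lt_sqrt_of_sq_lt (by linarith)
  linarith [two_mul_largerRoot_add ℓ r]

theorem largerRoot_le_left (hs : 0 ≤ ℓ + r) (hD : 0 ≤ (ℓ + r) ^ 2 + 4 * ℓ * r) :
    largerRoot ℓ r ≤ ℓ := by
  have hroot := sub_largerRoot_mul_sub_largerRoot hD
  set x := largerRoot ℓ r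
  by_contra! hℓ
  have hmul : (x - ℓ) * (x - r) = 2 * x ^ 2 := by linarith
  have hr : 0 ≤ x - r :=
    nonneg_of_mul_nonneg_right (hmul ▸ by positivity) (sub_pos.2 hℓ)
  have hx : 0 < x := by linarith
  -- AM-GM for the factors, whose sum is at most `2 * x`, bounds their product by `x ^ 2`.
  have hamgm : 4 * (x - ℓ) * (x - r) ≤ (2 * x) ^ 2 :=
    calc 4 * (x - ℓ) * (x - r) ≤ ((x - ℓ) + (x - r)) ^ 2 := four_mul_le_sq_add _ _
      _ ≤ (2 * x) ^ 2 := pow_le_pow_left₀ (by linarith) (by linarith) 2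
  linarith [pow_pos hx 2]

theorem largerRoot_lt_right (hs : 0 ≤ ℓ + r) (hD : 0 ≤ (ℓ + r) ^ 2 + 4 * ℓ * r) (hr : r ≠ 0) :
    largerRoot ℓ r < r := by
  have hle : largerRoot ℓ r ≤ r := by
    rw [largerRoot_comm]
    exact largerRoot_le_left (by linarith) (by linarith)
  refine hle.lt_of_ne fun heq ↦ hr ?_
  simpa [heq] using sub_largerRoot_mul_sub_largerRoot hD

theorem f_strictMono_joint_general (hs : 0 ≤ ℓ + r) (hD : 0 ≤ (ℓ + r) ^ 2 + 4 * ℓ * r)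
    (hr : r ≠ 0) (hℓ' : ℓ < ℓ') (hr' : r ≤ r') : largerRoot ℓ r < largerRoot ℓ' r' := by
  have hxℓ := largerRoot_le_left hs hD
  have hxr := largerRoot_lt_right hs hD hr
  apply lt_largerRoot
  rw [← sub_largerRoot_mul_sub_largerRoot hD]
  exact mul_lt_mul (sub_lt_sub_right hℓ' _) (sub_le_sub_right hr' _) (sub_pos.2 hxr)
    (sub_nonneg.2 (hxℓ.trans hℓ'.le))

end largerRoot

/-- Strict joint monotonicity of `f(ℓ, r) = (-(ℓ+r) + √((ℓ+r)² + 4ℓr))/2`: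
if `0 < ℓ < ℓ'` and `0 < r < r'` then `f(ℓ, r) < f(ℓ', r')`. -/
theorem f_strictMono_joint (ℓ ℓ' r r' : ℝ) (hℓ : 0 < ℓ) (hℓ' : ℓ < ℓ')
    (hr : 0 < r) (hr' : r < r') :
    (-(ℓ + r) + Real.sqrt ((ℓ + r) ^ 2 + 4 * ℓ * r)) / 2 <
      (-(ℓ' + r') + Real.sqrt ((ℓ' + r') ^ 2 + 4 * ℓ' * r')) / 2 :=
  f_strictMono_joint_general (by positivity) (by positivity) hr.ne' hℓ' hr'.le
end
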